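/- Every element of the orthogonal group O(n, ℝ) is a product of two involutions. -/

import Mathlib

/-!
Write an isometry as `f = H + J`, with `H = (f + f⁻¹) / 2` symmetric and `J = (f - f⁻¹) / 2`
skew-adjoint. They commute and `J² = H² - 1`. Let `K` be maximal among the `H`-invariant subspaces
with `K ⟂ J K`. If `K ⊔ J K` were not everything, then `H` would have an eigenvector `v` orthogonal
to it, and `v ⟂ J v` by skewness, so `K` could be enlarged by `v`. Hence `Kᗮ = J K`, and
`J Kᗮ = J² K ≤ K`: the reflection `r` in `K` commutes with `H` and anticommutes with `J`. It
therefore conjugates `f` to `H - J = f⁻¹`, and `f = (f r) r` is a product of two involutions.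
-/

theorem exists_sq_eq_one_eq_mul_of_semiconjBy_inv {G : Type*} [Group G] {g s : G}
    (hs : s ^ 2 = 1) (h : SemiconjBy s g g⁻¹) :
    ∃ a b : G, a ^ 2 = 1 ∧ b ^ 2 = 1 ∧ g = a * b := by
  rw [sq] at hs
  refine ⟨g * s, s, ?_, by rw [sq, hs], by rw [mul_assoc, hs, mul_one]⟩
  calc (g * s) ^ 2 = g * (s * g) * s := by simp only [sq, mul_assoc]
    _ = 1 := by rw [h.eq, mul_inv_cancel_left, hs]

section Module

open Submodule

variable {R M : Type*} [Semiring R] [AddCommMonoid M] [Module R M]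

theorem map_mem_invtSubmodule_of_commute {S T : Module.End R M} (h : Commute S T)
    {U : Submodule R M} (hU : U ∈ S.invtSubmodule) : U.map T ∈ S.invtSubmodule := by
  rintro _ ⟨x, hx, rfl⟩
  exact ⟨S x, hU hx, (LinearMap.congr_fun h.eq x).symm⟩

theorem span_singleton_mem_invtSubmodule_of_apply_eq_smul {T : Module.End R M} {μ : R} {v : M}
    (hv : T v = μ • v) : span R {v} ∈ T.invtSubmodule := by
  rw [Module.End.mem_invtSubmodule, span_singleton_le_iff_mem, mem_comap, hv]
  exact smul_mem _ μ (mem_span_singleton_self v)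

end Module

section RCLike

open Submodule

variable {𝕜 E F : Type*} [RCLike 𝕜] [NormedAddCommGroup E] [InnerProductSpace 𝕜 E]
  [NormedAddCommGroup F] [InnerProductSpace 𝕜 F]

theorem orthogonal_eq_of_isOrtho_of_sup_eq_top {U V : Submodule 𝕜 E} (h : U ⟂ V)
    (hsup : U ⊔ V = ⊤) : Uᗮ = V := by
  refine (eq_of_le_of_inf_le_of_sup_le h.ge ?_ ?_ (z := U)).symm
  · simp [inf_comm Uᗮ, U.inf_orthogonal_eq_bot]
  · simp [sup_comm V, hsup]

theorem reflection_apply_of_map_le {K : Submodule 𝕜 E} {L : Submodule 𝕜 F}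
    [K.HasOrthogonalProjection] [L.HasOrthogonalProjection] {T : E →ₗ[𝕜] F}
    (h : K.map T ≤ L) (h' : Kᗮ.map T ≤ Lᗮ) (x : E) :
    L.reflection (T x) = T (K.reflection x) := by
  obtain ⟨y, hy, z, hz, rfl⟩ := K.exists_add_mem_mem_orthogonal x
  simp only [map_add, reflection_mem_subspace_eq_self hy,
    reflection_mem_subspace_eq_self (h (mem_map_of_mem hy)),
    reflection_mem_subspace_orthogonalComplement_eq_neg hz,
    reflection_mem_subspace_orthogonalComplement_eq_neg (h' (mem_map_of_mem hz)), map_neg]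

theorem exists_mem_hasEigenvector_of_isSymmetric {T : Module.End 𝕜 E} (hT : T.IsSymmetric)
    {U : Submodule 𝕜 E} [FiniteDimensional 𝕜 U] (hU : U ∈ T.invtSubmodule) (hne : U ≠ ⊥) :
    ∃ v ∈ U, ∃ μ, T.HasEigenvector μ v := by
  have : Nontrivial U := nontrivial_iff_ne_bot.2 hne
  obtain ⟨v, hv⟩ :=
    (hT.restrict_invariant hU).hasEigenvalue_iSup_of_finiteDimensional.exists_hasEigenvector
  exact ⟨v, v.2, _, Module.End.mem_eigenspace_iff.2 (congrArg Subtype.val hv.apply_eq_smul),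
    fun h => hv.2 (Subtype.ext h)⟩

end RCLike

section Real

open Submodule

variable {E : Type*} [NormedAddCommGroup E] [InnerProductSpace ℝ E] {H J : Module.End ℝ E}

theorem inner_apply_left_of_isSkewAdjoint (hJ : (innerₗ E).IsSkewAdjoint J) (x y : E) :
    inner ℝ (J x) y = -inner ℝ x (J y) := by
  simpa using hJ x y

theorem isOrtho_map_left_iff_of_isSkewAdjoint (hJ : (innerₗ E).IsSkewAdjoint J)
    {U V : Submodule ℝ E} : U.map J ⟂ V ↔ U ⟂ V.map J := by
  simp [isOrtho_iff_inner_eq, inner_apply_left_of_isSkewAdjoint hJ]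

theorem isOrtho_map_span_singleton_of_isSkewAdjoint (hJ : (innerₗ E).IsSkewAdjoint J) (v : E) :
    span ℝ {v} ⟂ (span ℝ {v}).map J := by
  have hneg : inner ℝ v (J v) = -inner ℝ v (J v) := by
    rw [← inner_apply_left_of_isSkewAdjoint hJ, real_inner_comm]
  simpa [map_span] using self_eq_neg.1 hneg

theorem isOrtho_map_sup_of_isSkewAdjoint (hJ : (innerₗ E).IsSkewAdjoint J)
    {U V : Submodule ℝ E} (hU : U ⟂ U.map J) (hV : V ⟂ V.map J) (hVU : V ⟂ U.map J) :
    (U ⊔ V) ⟂ (U ⊔ V).map J := by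
  have hUV : U ⟂ V.map J := (isOrtho_map_left_iff_of_isSkewAdjoint hJ).1 hVU.symm
  rw [Submodule.map_sup, isOrtho_sup_left, isOrtho_sup_right, isOrtho_sup_right]
  exact ⟨⟨hU, hUV⟩, hVU, hV⟩

theorem sup_map_eq_top_of_maximal [FiniteDimensional ℝ E] (hH : H.IsSymmetric)
    (hJ : (innerₗ E).IsSkewAdjoint J) (hHJ : Commute H J) {K : Submodule ℝ E}
    (hK : Maximal (fun U => U ∈ H.invtSubmodule ∧ U ⟂ U.map J) K) : K ⊔ K.map J = ⊤ := by
  obtain ⟨⟨hKH, hKJ⟩, hmax⟩ := hK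
  have hKJH : K.map J ∈ H.invtSubmodule := map_mem_invtSubmodule_of_commute hHJ hKH
  by_contra hne
  obtain ⟨v, hv, μ, hvμ⟩ := exists_mem_hasEigenvector_of_isSymmetric hH
    (hH.orthogonalComplement_mem_invtSubmodule (Module.End.invtSubmodule.sup_mem hKH hKJH))
    (mt orthogonal_eq_bot_iff.1 hne)
  obtain ⟨hvK, hvJK⟩ : span ℝ {v} ⟂ K ∧ span ℝ {v} ⟂ K.map J :=
    isOrtho_sup_right.1 ((span_singleton_le_iff_mem _ _).2 hv)
  have hvH : span ℝ {v} ∈ H.invtSubmodule :=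
    span_singleton_mem_invtSubmodule_of_apply_eq_smul hvμ.apply_eq_smul
  have hle : K ⊔ span ℝ {v} ≤ K :=
    hmax ⟨Module.End.invtSubmodule.sup_mem hKH hvH,
      isOrtho_map_sup_of_isSkewAdjoint hJ hKJ (isOrtho_map_span_singleton_of_isSkewAdjoint hJ v)
        hvJK⟩ le_sup_left
  exact hvμ.2 (span_singleton_eq_bot.1 (isOrtho_self.1 (hvK.mono_right (le_sup_right.trans hle))))

theorem exists_mem_invtSubmodule_orthogonal_eq_map [FiniteDimensional ℝ E] (hH : H.IsSymmetric)
    (hJ : (innerₗ E).IsSkewAdjoint J) (hHJ : Commute H J) :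
    ∃ K ∈ H.invtSubmodule, Kᗮ = K.map J := by
  obtain ⟨K, hK, hmax⟩ := (wellFounded_gt (α := Submodule ℝ E)).has_min
    {U | U ∈ H.invtSubmodule ∧ U ⟂ U.map J} ⟨⊥, by simp⟩
  have hKmax : Maximal (fun U => U ∈ H.invtSubmodule ∧ U ⟂ U.map J) K :=
    maximal_iff_forall_gt.2 ⟨hK, fun U hKU hU => hmax U hU hKU⟩
  exact ⟨K, hK.1,
    orthogonal_eq_of_isOrtho_of_sup_eq_top hK.2 (sup_map_eq_top_of_maximal hH hJ hHJ hKmax)⟩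

theorem exists_reflection_commute_anticommute [FiniteDimensional ℝ E] (hH : H.IsSymmetric)
    (hJ : (innerₗ E).IsSkewAdjoint J) (hHJ : Commute H J)
    (hJJ : H.invtSubmodule ≤ (J * J).invtSubmodule) :
    ∃ K : Submodule ℝ E, ∀ x,
      K.reflection (H x) = H (K.reflection x) ∧ K.reflection (J x) = -J (K.reflection x) := by
  obtain ⟨K, hKH, hKJ⟩ := exists_mem_invtSubmodule_orthogonal_eq_map hH hJ hHJ
  have hKJ' : Kᗮ.map J ≤ Kᗮᗮ := by
    rw [hKJ, ← Submodule.map_comp, ← hKJ, K.orthogonal_orthogonal]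
    exact (J * J).mem_invtSubmodule_iff_map_le.1 (hJJ hKH)
  refine ⟨K, fun x => ⟨reflection_apply_of_map_le (H.mem_invtSubmodule_iff_map_le.1 hKH)
    (H.mem_invtSubmodule_iff_map_le.1 (hH.orthogonalComplement_mem_invtSubmodule hKH)) x, ?_⟩⟩
  -- `J` intertwines the reflections in `K` and in `Kᗮ`, which are opposite.
  rw [← reflection_apply_of_map_le hKJ.ge hKJ', reflection_orthogonal_apply, neg_neg]

theorem exists_isSymmetric_isSkewAdjoint_decomposition (f : E ≃ₗᵢ[ℝ] E) :
    ∃ H J : Module.End ℝ E, H.IsSymmetric ∧ (innerₗ E).IsSkewAdjoint J ∧ Commute H J ∧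
      J * J = H * H - 1 ∧ (∀ x, f x = H x + J x) ∧ ∀ x, f⁻¹ x = H x - J x := by
  let H : Module.End ℝ E := (2⁻¹ : ℝ) • (f.toLinearMap + f.symm.toLinearMap)
  let J : Module.End ℝ E := (2⁻¹ : ℝ) • (f.toLinearMap - f.symm.toLinearMap)
  have hH (x : E) : H x = (2⁻¹ : ℝ) • (f x + f.symm x) := rfl
  have hJ (x : E) : J x = (2⁻¹ : ℝ) • (f x - f.symm x) := rfl
  refine ⟨H, J, fun x y => ?_, fun x y => ?_, LinearMap.ext fun x => ?_, LinearMap.ext fun x => ?_,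
    fun x => ?_, fun x => ?_⟩
  · simp [hH, inner_add_left, inner_add_right, inner_smul_left, inner_smul_right,
      f.inner_map_eq_flip, f.symm.inner_map_eq_flip, add_comm]
  · simp [hJ, inner_sub_right, inner_smul_right, f.inner_map_eq_flip, f.symm.inner_map_eq_flip,
      ← mul_neg]
  · simp only [Module.End.mul_apply, hH, hJ, map_smul, map_add, map_sub, f.apply_symm_apply,
      f.symm_apply_apply]
    module
  · simp only [Module.End.mul_apply, LinearMap.sub_apply, Module.End.one_apply, hH, hJ, map_smul,
      map_add, map_sub, f.apply_symm_apply, f.symm_apply_apply]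
    module
  · rw [hH, hJ]
    module
  · rw [hH, hJ, LinearIsometryEquiv.coe_inv]
    module

theorem exists_reflection_semiconjBy_inv [FiniteDimensional ℝ E] (f : E ≃ₗᵢ[ℝ] E) :
    ∃ K : Submodule ℝ E, SemiconjBy K.reflection f f⁻¹ := by
  obtain ⟨H, J, hH, hJ, hHJ, hJJ, hf, hf'⟩ := exists_isSymmetric_isSkewAdjoint_decomposition f
  have hinv : H.invtSubmodule ≤ (J * J).invtSubmodule := fun U hU x hx => by
    rw [mem_comap, hJJ]
    exact U.sub_mem (hU (hU hx)) hx
  obtain ⟨K, hK⟩ := exists_reflection_commute_anticommute hH hJ hHJ hinv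
  refine ⟨K, LinearIsometryEquiv.ext fun x => ?_⟩
  calc K.reflection (f x) = K.reflection (H x) + K.reflection (J x) := by rw [hf, map_add]
    _ = H (K.reflection x) - J (K.reflection x) := by rw [(hK x).1, (hK x).2, sub_eq_add_neg]
    _ = f⁻¹ (K.reflection x) := (hf' _).symm

theorem orthogonal_product_of_two_involutions_general [FiniteDimensional ℝ E] (f : E ≃ₗᵢ[ℝ] E) :
    ∃ S T : E ≃ₗᵢ[ℝ] E, S ^ 2 = 1 ∧ T ^ 2 = 1 ∧ f = S * T := by
  obtain ⟨K, hK⟩ := exists_reflection_semiconjBy_inv f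
  exact exists_sq_eq_one_eq_mul_of_semiconjBy_inv (by rw [sq, K.reflection_mul_reflection]) hK

end Real

/-- The action of unitary matrices (orthogonal ones if `𝕜 = ℝ`) on Euclidean space, as an
isomorphism onto the group of its linear isometries. -/
noncomputable def unitaryGroupMulEquivLinearIsometryEquiv (𝕜 ι : Type*) [RCLike 𝕜] [Fintype ι]
    [DecidableEq ι] :
    Matrix.unitaryGroup ι 𝕜 ≃* (EuclideanSpace 𝕜 ι ≃ₗᵢ[𝕜] EuclideanSpace 𝕜 ι) :=
  (Unitary.mapEquiv (.ofClass (Matrix.toEuclideanCLM (n := ι) (𝕜 := 𝕜)))).toMulEquiv.trans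
    Unitary.linearIsometryEquiv

theorem orthogonal_product_of_two_involutions
    (n : ℕ) (A : Matrix.orthogonalGroup (Fin n) ℝ) :
    ∃ S T : Matrix.orthogonalGroup (Fin n) ℝ,
      S ^ 2 = 1 ∧ T ^ 2 = 1 ∧ A = S * T := by
  let φ := unitaryGroupMulEquivLinearIsometryEquiv ℝ (Fin n)
  obtain ⟨S, T, hS, hT, hST⟩ := orthogonal_product_of_two_involutions_general (φ A)
  exact ⟨φ.symm S, φ.symm T, by rw [← map_pow, hS, map_one], by rw [← map_pow, hT, map_one],
    by rw [← map_mul, ← hST, φ.symm_apply_apply]⟩
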